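/- arXiv:0710.5414 — 3 statements merged into one kernel-verified Lean document; each statement's English description precedes it below -/
import Mathlib

section
/- A tempered distribution w on ℝⁿ is given by a polynomial if and only if the support of its Fourier transform is contained in {0}; that is, w is given by a polynomial if and only if ⟨w, 𝓕φ⟩ = 0 for every Schwartz function φ ∈ 𝒮 whose topological support does not contain the origin (equivalently, which vanishes on some neighborhood of 0). -/
/-!
Write `u = w ∘ 𝓕`.

If `w` is integration against `P`, then for `φ` vanishing near `0` the product `P · 𝓕 φ` is `𝓕 ψ`,
where `ψ` is obtained from `φ` by a constant coefficient differential operator and so also vanishes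
near `0` (`exists_fourier_eq_eval_mul`). By Fourier inversion `w (𝓕 φ) = ∫ 𝓕 ψ = ψ 0 = 0`.

Conversely, let `u` annihilate the functions vanishing near `0`. By continuity `u` is bounded by
finitely many Schwartz seminorms, involving derivatives of order at most `N`. If the derivatives of
`φ` up to order `N` vanish at `0`, then Taylor's estimate `‖D^j φ x‖ ≤ C ‖x‖ ^ (N + 1 - j)` shows
that those seminorms of `χ (x / ε) φ` are `O(ε)` for a bump function `χ`
(`exists_seminorm_cutoff_le`). Since `φ - χ (x / ε) φ` vanishes near `0`, it follows that `u φ = 0`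
(`exists_order_of_support_zero`). Applied to `φ = 𝓕⁻ ψ`, whose derivatives at `0` are, up to
constants, moments of `ψ`, this says that `w` vanishes on the common kernel of the finitely many
moment functionals of order at most `N`. By linear algebra `w` is a linear combination of these
functionals, that is, integration against a polynomial.
-/

open MeasureTheory SchwartzMap

/-- A tempered distribution is *given by a polynomial* if it is integration against a
polynomial function. -/
noncomputable def IsPolynomialDistrib {n : ℕ}
    (w : SchwartzMap (EuclideanSpace ℝ (Fin n)) ℂ →L[ℂ] ℂ) : Prop :=
  ∃ P : MvPolynomial (Fin n) ℂ, ∀ φ : SchwartzMap (EuclideanSpace ℝ (Fin n)) ℂ,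
    w φ = ∫ x : EuclideanSpace ℝ (Fin n),
      MvPolynomial.eval (fun j => ((x j : ℝ) : ℂ)) P * φ x

open scoped FourierTransform LineDeriv ContDiff

/-! ### Taylor's estimate and the cutoff -/

section Cutoff

variable {E : Type*} [NormedAddCommGroup E] [NormedSpace ℝ E]

lemma exists_norm_iteratedFDeriv_le_pow (φ : SchwartzMap E ℂ) (N : ℕ)
    (h : ∀ i ≤ N, iteratedFDeriv ℝ i φ 0 = 0) (d : ℕ) :
    ∀ j, j + d = N + 1 → ∃ C : ℝ, 0 ≤ C ∧ ∀ x, ‖iteratedFDeriv ℝ j φ x‖ ≤ C * ‖x‖ ^ d := by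
  induction d with
  | zero =>
    intro j _
    refine ⟨SchwartzMap.seminorm ℝ 0 j φ, apply_nonneg _ _, fun x => ?_⟩
    simpa using SchwartzMap.norm_iteratedFDeriv_le_seminorm ℝ φ j x
  | succ d ih =>
    intro j hj
    obtain ⟨C, hC, hb⟩ := ih (j + 1) (by omega)
    refine ⟨C, hC, fun x => ?_⟩
    have hd : Differentiable ℝ (iteratedFDeriv ℝ j φ) :=
      (φ.smooth ⊤).differentiable_iteratedFDeriv (mod_cast ENat.natCast_lt_top j)
    have key := (convex_closedBall (0 : E) ‖x‖).norm_image_sub_le_of_norm_fderiv_le (𝕜 := ℝ)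
      (f := iteratedFDeriv ℝ j φ) (C := C * ‖x‖ ^ d) (x := 0) (y := x)
      (fun y _ => hd y) (fun y hy => ?_) (by simp) (by simp)
    · rw [h j (by omega), sub_zero, sub_zero] at key
      rw [pow_succ, ← mul_assoc]
      exact key
    · rw [norm_fderiv_iteratedFDeriv]
      refine (hb y).trans ?_
      have : ‖y‖ ≤ ‖x‖ := by simpa using hy
      gcongr

variable [HasContDiffBump E]

/-- A smooth bump function equal to `1` on the unit ball and supported in the ball of radius `2`. -/
noncomputable def bumpAtZero (E : Type*) [NormedAddCommGroup E] [NormedSpace ℝ E] :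
    ContDiffBump (0 : E) := ⟨1, 2, by norm_num, by norm_num⟩

/-- The rescaled bump function `x ↦ χ (x / ε)`. -/
noncomputable def cutoff (E : Type*) [NormedAddCommGroup E] [NormedSpace ℝ E] [HasContDiffBump E]
    (ε : ℝ) (x : E) : ℝ := bumpAtZero E (ε⁻¹ • x)

lemma cutoff_contDiff (ε : ℝ) : ContDiff ℝ ∞ (cutoff E ε) :=
  (bumpAtZero E).contDiff.comp (contDiff_const_smul _)

lemma tsupport_cutoff_subset {ε : ℝ} (hε : 0 < ε) :
    tsupport (cutoff E ε) ⊆ Metric.closedBall 0 (2 * ε) := by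
  refine closure_minimal (fun x hx => ?_) Metric.isClosed_closedBall
  have h : ε⁻¹ • x ∈ Function.support (bumpAtZero E) := hx
  rw [(bumpAtZero E).support_eq, mem_ball_zero_iff, norm_smul, norm_inv, Real.norm_eq_abs,
    abs_of_pos hε] at h
  have h2 : ε⁻¹ * ‖x‖ < 2 := h
  rw [mem_closedBall_zero_iff]
  rw [inv_mul_lt_iff₀ hε] at h2
  linarith

lemma cutoff_eq_one {ε : ℝ} (hε : 0 < ε) {x : E} (hx : ‖x‖ ≤ ε) : cutoff E ε x = 1 := by
  apply (bumpAtZero E).one_of_mem_closedBall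
  rw [mem_closedBall_zero_iff, norm_smul, norm_inv, Real.norm_eq_abs, abs_of_pos hε]
  change ε⁻¹ * ‖x‖ ≤ 1
  rwa [inv_mul_le_iff₀ hε, mul_one]

variable [FiniteDimensional ℝ E]

lemma cutoff_hasTemperateGrowth {ε : ℝ} (hε : 0 < ε) : (cutoff E ε).HasTemperateGrowth :=
  HasCompactSupport.hasTemperateGrowth
    ((isCompact_closedBall _ _).of_isClosed_subset (isClosed_tsupport _)
      (tsupport_cutoff_subset hε)) (cutoff_contDiff ε)

lemma exists_norm_iteratedFDeriv_cutoff_le (i : ℕ) :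
    ∃ A : ℝ, 0 ≤ A ∧ ∀ ε : ℝ, 0 < ε → ∀ x : E,
      ‖iteratedFDeriv ℝ i (cutoff E ε) x‖ ≤ ε⁻¹ ^ i * A := by
  let χ := (bumpAtZero E).hasCompactSupport.toSchwartzMap (bumpAtZero E).contDiff
  refine ⟨SchwartzMap.seminorm ℝ 0 i χ, apply_nonneg _ _, fun ε hε x => ?_⟩
  have h := SchwartzMap.norm_iteratedFDeriv_le_seminorm ℝ χ i (ε⁻¹ • x)
  have hc : iteratedFDeriv ℝ i (cutoff E ε) x =
      ε⁻¹ ^ i • iteratedFDeriv ℝ i (bumpAtZero E) (ε⁻¹ • x) := by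
    have := iteratedFDeriv_comp_const_smul (i := i) (f := bumpAtZero E) ε⁻¹
      ((bumpAtZero E).contDiff (n := i))
    exact congrFun this x
  rw [hc, norm_smul, norm_pow, norm_inv, Real.norm_eq_abs, abs_of_pos hε]
  gcongr
  exact h

/-- Multiplying a function that vanishes to order `N` at `0` by the cutoff at scale `ε` makes
every seminorm involving at most `N` derivatives of size `O(ε)`. -/
lemma exists_seminorm_cutoff_le (φ : SchwartzMap E ℂ) (N : ℕ)
    (h : ∀ i ≤ N, iteratedFDeriv ℝ i φ 0 = 0) (k l : ℕ) (hl : l ≤ N) :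
    ∃ C : ℝ, 0 ≤ C ∧ ∀ ε : ℝ, 0 < ε → ε ≤ 1 →
      SchwartzMap.seminorm ℂ k l (smulLeftCLM ℂ (cutoff E ε) φ) ≤ C * ε := by
  choose A hA hAb using exists_norm_iteratedFDeriv_cutoff_le (E := E)
  have hT : ∀ j, ∃ C : ℝ, 0 ≤ C ∧
      (j ≤ N → ∀ x, ‖iteratedFDeriv ℝ j φ x‖ ≤ C * ‖x‖ ^ (N + 1 - j)) := by
    intro j
    by_cases hj : j ≤ N
    · obtain ⟨C, hC, hb⟩ := exists_norm_iteratedFDeriv_le_pow φ N h (N + 1 - j) j (by omega)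
      exact ⟨C, hC, fun _ => hb⟩
    · exact ⟨0, le_rfl, fun hj' => absurd hj' hj⟩
  choose T hT hTb using hT
  have hsum : 0 ≤ ∑ i ∈ Finset.range (l + 1),
      (l.choose i : ℝ) * A i * (T (l - i) * 2 ^ (N + 1 - (l - i))) :=
    Finset.sum_nonneg fun i _ =>
      mul_nonneg (mul_nonneg (by positivity) (hA i)) (mul_nonneg (hT _) (by positivity))
  refine ⟨2 ^ k * ∑ i ∈ Finset.range (l + 1),
    (l.choose i : ℝ) * A i * (T (l - i) * 2 ^ (N + 1 - (l - i))), by positivity,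
    fun ε hε hε1 => ?_⟩
  refine SchwartzMap.seminorm_le_bound ℂ k l _ (by positivity) fun x => ?_
  rw [smulLeftCLM_apply (cutoff_hasTemperateGrowth hε)]
  by_cases hx : x ∈ Metric.closedBall (0 : E) (2 * ε)
  · rw [mem_closedBall_zero_iff] at hx
    have h1 : ‖x‖ ^ k ≤ 2 ^ k := by gcongr; linarith
    have h2 : ‖iteratedFDeriv ℝ l (fun y => cutoff E ε y • φ y) x‖ ≤ (∑ i ∈ Finset.range (l + 1),
        (l.choose i : ℝ) * A i * (T (l - i) * 2 ^ (N + 1 - (l - i)))) * ε := by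
      refine (norm_iteratedFDeriv_smul_le (cutoff_contDiff ε) (φ.smooth ⊤) x
        (mod_cast le_top)).trans ?_
      rw [Finset.sum_mul]
      refine Finset.sum_le_sum fun i hi => ?_
      have hi' : i ≤ l := by simpa [Nat.lt_succ_iff] using hi
      have hφ : ‖iteratedFDeriv ℝ (l - i) φ x‖ ≤ T (l - i) * (2 * ε) ^ (N + 1 - (l - i)) := by
        refine (hTb (l - i) (by omega) x).trans ?_
        have := hT (l - i)
        gcongr
      have hpow : ε⁻¹ ^ i * ε ^ (N + 1 - (l - i)) ≤ ε := by
        -- the net power of `ε` is `N + 1 - l ≥ 1`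
        have he : N + 1 - (l - i) = i + ((N - l) + 1) := by omega
        rw [he, pow_add, ← mul_assoc, ← mul_pow, inv_mul_cancel₀ hε.ne', one_pow, one_mul, pow_succ]
        exact mul_le_of_le_one_left hε.le (pow_le_one₀ hε.le hε1)
      calc (l.choose i : ℝ) * ‖iteratedFDeriv ℝ i (cutoff E ε) x‖ * ‖iteratedFDeriv ℝ (l - i) φ x‖
          ≤ (l.choose i : ℝ) * (ε⁻¹ ^ i * A i) * (T (l - i) * (2 * ε) ^ (N + 1 - (l - i))) := by
            have := hA i
            gcongr
            exact hAb i ε hε x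
        _ = (l.choose i : ℝ) * A i * (T (l - i) * 2 ^ (N + 1 - (l - i))) *
              (ε⁻¹ ^ i * ε ^ (N + 1 - (l - i))) := by rw [mul_pow]; ring
        _ ≤ _ := by
            have := hA i
            have := hT (l - i)
            gcongr
    rw [mul_assoc]
    gcongr
  · have : iteratedFDeriv ℝ l (fun y => cutoff E ε y • φ y) x = 0 := by
      by_contra hne
      exact hx (tsupport_cutoff_subset hε
        (tsupport_smul_subset_left _ _ (support_iteratedFDeriv_subset l hne)))
    rw [this]
    simp only [norm_zero, mul_zero]
    positivity

/-- A tempered distribution supported at `0` has finite order there: it annihilates every function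
whose derivatives up to some order `N` vanish at `0`. -/
lemma exists_order_of_support_zero (u : SchwartzMap E ℂ →L[ℂ] ℂ)
    (hu : ∀ φ : SchwartzMap E ℂ, (0 : E) ∉ tsupport ⇑φ → u φ = 0) :
    ∃ N : ℕ, ∀ φ : SchwartzMap E ℂ, (∀ i ≤ N, iteratedFDeriv ℝ i φ 0 = 0) → u φ = 0 := by
  obtain ⟨s, C, -, hC⟩ := Seminorm.bound_of_continuous (schwartz_withSeminorms ℂ E ℂ)
    ((normSeminorm ℂ ℂ).comp u.toLinearMap) (by exact u.continuous.norm)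
  refine ⟨s.sup Prod.snd, fun φ hφ => ?_⟩
  have hD : ∀ p : ℕ × ℕ, ∃ D : ℝ, 0 ≤ D ∧ (p ∈ s → ∀ ε : ℝ, 0 < ε → ε ≤ 1 →
      SchwartzMap.seminorm ℂ p.1 p.2 (smulLeftCLM ℂ (cutoff E ε) φ) ≤ D * ε) := by
    intro p
    by_cases hp : p ∈ s
    · obtain ⟨D, hD, hb⟩ := exists_seminorm_cutoff_le φ _ hφ p.1 p.2
        (Finset.le_sup (f := Prod.snd) hp)
      exact ⟨D, hD, fun _ => hb⟩
    · exact ⟨0, le_rfl, fun hp' => absurd hp' hp⟩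
  choose D hD hDb using hD
  have hS : 0 ≤ ∑ p ∈ s, D p := Finset.sum_nonneg fun p _ => hD p
  have hle : ∀ ε : ℝ, 0 < ε → ε ≤ 1 → ‖u φ‖ ≤ C * (∑ p ∈ s, D p) * ε := by
    intro ε hε hε1
    have hzero : u (φ - smulLeftCLM ℂ (cutoff E ε) φ) = 0 := by
      apply hu
      rw [notMem_tsupport_iff_eventuallyEq]
      filter_upwards [Metric.closedBall_mem_nhds (0 : E) hε] with x hx
      rw [mem_closedBall_zero_iff] at hx
      rw [sub_apply, smulLeftCLM_apply_apply (cutoff_hasTemperateGrowth hε), cutoff_eq_one hε hx]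
      simp
    have heq : u φ = u (smulLeftCLM ℂ (cutoff E ε) φ) := by
      rwa [map_sub, sub_eq_zero] at hzero
    rw [heq, mul_assoc]
    have h1 := hC (smulLeftCLM ℂ (cutoff E ε) φ)
    refine (show ‖u (smulLeftCLM ℂ (cutoff E ε) φ)‖ ≤ C * _ from h1).trans ?_
    gcongr
    refine Seminorm.finset_sup_apply_le (by positivity) fun p hp => ?_
    refine (hDb p hp ε hε hε1).trans ?_
    gcongr
    exact Finset.single_le_sum (fun q _ => hD q) hp
  have hlim : Filter.Tendsto (fun ε : ℝ => C * (∑ p ∈ s, D p) * ε)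
      (nhdsWithin 0 (Set.Ioi 0)) (nhds 0) := by
    have : Continuous fun ε : ℝ => C * (∑ p ∈ s, D p) * ε := by fun_prop
    simpa using (this.tendsto 0).mono_left nhdsWithin_le_nhds
  have : ‖u φ‖ ≤ 0 := ge_of_tendsto hlim (by
    filter_upwards [Ioc_mem_nhdsGT (zero_lt_one' ℝ)] with ε hε using hle ε hε.1 hε.2)
  exact norm_le_zero_iff.1 this

end Cutoff

/-! ### Polynomials and the Fourier transform -/

section Fourier

variable {n : ℕ}

local notation "𝔼" n => EuclideanSpace ℝ (Fin n)

lemma hasTemperateGrowth_eval (P : MvPolynomial (Fin n) ℂ) :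
    (fun x : 𝔼 n => MvPolynomial.eval (fun j => ((x j : ℝ) : ℂ)) P).HasTemperateGrowth := by
  induction P using MvPolynomial.induction_on with
  | C a => simp
  | add p q hp hq => simpa [Pi.add_def] using hp.add hq
  | mul_X p i hp =>
    have h : (fun x : 𝔼 n => ((x i : ℝ) : ℂ)).HasTemperateGrowth :=
      (Complex.ofRealCLM.comp (EuclideanSpace.proj i : (𝔼 n) →L[ℝ] ℝ)).hasTemperateGrowth
    simpa [Pi.mul_def] using hp.mul h

/-- The tempered distribution `φ ↦ ∫ P φ`. -/
noncomputable def polyDistrib (P : MvPolynomial (Fin n) ℂ) : SchwartzMap (𝔼 n) ℂ →L[ℂ] ℂ :=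
  (integralCLM ℂ volume).comp
    (smulLeftCLM ℂ fun x : 𝔼 n => MvPolynomial.eval (fun j => ((x j : ℝ) : ℂ)) P)

lemma polyDistrib_apply (P : MvPolynomial (Fin n) ℂ) (φ : SchwartzMap (𝔼 n) ℂ) :
    polyDistrib P φ = ∫ x : 𝔼 n, MvPolynomial.eval (fun j => ((x j : ℝ) : ℂ)) P * φ x := by
  simp [polyDistrib, integralCLM_apply, smulLeftCLM_apply_apply (hasTemperateGrowth_eval P)]

lemma integrable_eval_mul (P : MvPolynomial (Fin n) ℂ) (φ : SchwartzMap (𝔼 n) ℂ) :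
    Integrable fun x : 𝔼 n => MvPolynomial.eval (fun j => ((x j : ℝ) : ℂ)) P * φ x := by
  have := (smulLeftCLM ℂ (fun x : 𝔼 n =>
    MvPolynomial.eval (fun j => ((x j : ℝ) : ℂ)) P) φ).integrable (μ := volume)
  rw [smulLeftCLM_apply (hasTemperateGrowth_eval P)] at this
  exact this

/-- `P · 𝓕 φ` is the Fourier transform of a constant coefficient differential operator applied to
`φ`; only the fact that such an operator does not enlarge the support is recorded. -/
lemma exists_fourier_eq_eval_mul (P : MvPolynomial (Fin n) ℂ) (φ : SchwartzMap (𝔼 n) ℂ) :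
    ∃ ψ : SchwartzMap (𝔼 n) ℂ, tsupport ⇑ψ ⊆ tsupport ⇑φ ∧
      ∀ x, MvPolynomial.eval (fun j => ((x j : ℝ) : ℂ)) P * 𝓕 φ x = 𝓕 ψ x := by
  induction P using MvPolynomial.induction_on with
  | C a =>
    refine ⟨a • φ, tsupport_smul_subset_right (fun _ => a) φ, fun x => ?_⟩
    rw [FourierTransform.fourier_smul]
    simp
  | add p q hp hq =>
    obtain ⟨ψ₁, h₁, h₁'⟩ := hp
    obtain ⟨ψ₂, h₂, h₂'⟩ := hq
    refine ⟨ψ₁ + ψ₂, (tsupport_add ψ₁ ψ₂).trans (Set.union_subset h₁ h₂), fun x => ?_⟩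
    rw [FourierTransform.fourier_add, map_add, add_mul, h₁', h₂']
    simp
  | mul_X p i hp =>
    obtain ⟨ψ, h, h'⟩ := hp
    let v : 𝔼 n := EuclideanSpace.single i 1
    let ψ' : SchwartzMap (𝔼 n) ℂ := ∂_{v} ψ
    refine ⟨(2 * Real.pi * Complex.I : ℂ)⁻¹ • ψ',
      (tsupport_smul_subset_right (fun _ => (2 * Real.pi * Complex.I : ℂ)⁻¹) ψ').trans
        ((tsupport_lineDerivOp_subset v ψ).trans h), fun x => ?_⟩
    have hg : (fun x : 𝔼 n => inner ℝ x v).HasTemperateGrowth :=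
      by fun_prop
    rw [FourierTransform.fourier_smul, fourier_lineDerivOp_eq, smul_smul,
      inv_mul_cancel₀ Complex.two_pi_I_ne_zero, one_smul, smulLeftCLM_apply_apply hg, ← h']
    simp [v, EuclideanSpace.inner_single_right]
    ring

lemma fourierInv_apply_zero (g : SchwartzMap (𝔼 n) ℂ) : 𝓕⁻ g 0 = ∫ x, g x := by
  rw [fourierInv_coe, Real.fourierInv_eq]
  simp

/-- Derivatives of `𝓕⁻ ψ` are inverse Fourier transforms of monomials times `ψ`. -/
lemma exists_iteratedLineDeriv_fourierInv (ψ : SchwartzMap (𝔼 n) ℂ) (i : ℕ) (σ : Fin i → Fin n) :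
    ∃ g : SchwartzMap (𝔼 n) ℂ,
      ∂^{fun j => EuclideanSpace.single (σ j) (1 : ℝ)} (𝓕⁻ ψ) = 𝓕⁻ g ∧
      ∀ x, g x = (2 * Real.pi * Complex.I) ^ i *
        (MvPolynomial.eval (fun j => ((x j : ℝ) : ℂ)) (∏ j, MvPolynomial.X (σ j)) * ψ x) := by
  induction i with
  | zero => exact ⟨ψ, rfl, fun x => by simp⟩
  | succ i ih =>
    obtain ⟨g, hg, hg'⟩ := ih (Fin.tail σ)
    refine ⟨(2 * Real.pi * Complex.I) •
      smulLeftCLM ℂ (inner ℝ · (EuclideanSpace.single (σ 0) (1 : ℝ))) g, ?_, ?_⟩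
    · rw [LineDeriv.iteratedLineDerivOp_succ_left]
      have : (Fin.tail fun j => EuclideanSpace.single (σ j) (1 : ℝ)) =
        fun j => EuclideanSpace.single (Fin.tail σ j) (1 : ℝ) := rfl
      rw [this, hg, lineDerivOp_fourierInv_eq]
    · intro x
      have ht : (fun x : 𝔼 n =>
          inner ℝ x (EuclideanSpace.single (σ 0) (1 : ℝ))).HasTemperateGrowth :=
        by fun_prop
      rw [smul_apply, smulLeftCLM_apply_apply ht, hg', Fin.prod_univ_succ]
      simp [EuclideanSpace.inner_single_right, Fin.tail]
      ring

lemma iteratedFDeriv_fourierInv_eq_zero (ψ : SchwartzMap (𝔼 n) ℂ) (i : ℕ)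
    (h : ∀ σ : Fin i → Fin n, polyDistrib (∏ j, MvPolynomial.X (σ j)) ψ = 0) :
    iteratedFDeriv ℝ i (𝓕⁻ ψ : SchwartzMap (𝔼 n) ℂ) 0 = 0 := by
  apply ContinuousMultilinearMap.toMultilinearMap_injective
  refine Module.Basis.ext_multilinear
    (fun _ => (EuclideanSpace.basisFun (Fin n) ℝ).toBasis) fun σ => ?_
  obtain ⟨g, hg, hg'⟩ := exists_iteratedLineDeriv_fourierInv ψ i σ
  have h0 : iteratedFDeriv ℝ i (𝓕⁻ ψ : SchwartzMap (𝔼 n) ℂ) 0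
      (fun j => EuclideanSpace.single (σ j) (1 : ℝ)) = 0 := by
    rw [← iteratedLineDerivOp_eq_iteratedFDeriv, hg, fourierInv_apply_zero]
    simp_rw [hg']
    rw [integral_const_mul, ← polyDistrib_apply, h, mul_zero]
  simpa using h0

end Fourier

/-- A tempered distribution is a polynomial iff its Fourier transform is supported in `{0}`. -/
theorem stmt_0 {n : ℕ} (hn : 1 ≤ n)
    (w : SchwartzMap (EuclideanSpace ℝ (Fin n)) ℂ →L[ℂ] ℂ) :
    IsPolynomialDistrib w ↔
      ∀ φ : SchwartzMap (EuclideanSpace ℝ (Fin n)) ℂ,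
        (0 : EuclideanSpace ℝ (Fin n)) ∉ tsupport ⇑φ →
        w (SchwartzMap.fourierTransformCLM ℂ φ) = 0 := by
  constructor
  · rintro ⟨P, hP⟩ φ hφ
    obtain ⟨ψ, hψ, hψ'⟩ := exists_fourier_eq_eval_mul P φ
    rw [hP, fourierTransformCLM_apply]
    simp_rw [hψ']
    rw [← fourierInv_apply_zero, FourierTransform.fourierInv_fourier_eq]
    exact image_eq_zero_of_notMem_tsupport fun h0 => hφ (hψ h0)
  · intro h
    obtain ⟨N, hN⟩ := exists_order_of_support_zero
      (w.comp (SchwartzMap.fourierTransformCLM ℂ)) (fun φ hφ => h φ hφ)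
    let M : (Σ i : Fin (N + 1), (Fin i → Fin n)) → MvPolynomial (Fin n) ℂ :=
      fun σ => ∏ j, MvPolynomial.X (σ.2 j)
    have hmem : w.toLinearMap ∈
        Submodule.span ℂ (Set.range fun σ => (polyDistrib (M σ)).toLinearMap) := by
      refine mem_span_of_iInf_ker_le_ker fun ψ hψ => ?_
      simp only [Submodule.mem_iInf, LinearMap.mem_ker] at hψ
      have h1 := hN (𝓕⁻ ψ) fun i hi =>
        iteratedFDeriv_fourierInv_eq_zero ψ i fun σ => hψ ⟨⟨i, by omega⟩, σ⟩
      rw [ContinuousLinearMap.comp_apply, fourierTransformCLM_apply,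
        FourierTransform.fourier_fourierInv_eq] at h1
      exact h1
    obtain ⟨c, hc⟩ := (Submodule.mem_span_range_iff_exists_fun ℂ).1 hmem
    refine ⟨∑ σ, MvPolynomial.C (c σ) * M σ, fun φ => ?_⟩
    have h2 : w φ = ∑ σ, c σ * polyDistrib (M σ) φ := by
      have := LinearMap.congr_fun hc φ
      simpa using this.symm
    rw [h2]
    simp_rw [polyDistrib_apply, ← integral_const_mul]
    rw [← integral_finsetSum _ fun σ _ => (integrable_eval_mul (M σ) φ).const_mul (c σ)]
    congr 1
    ext x
    simp [Finset.sum_mul, mul_assoc]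
end

section
/- For a Schwartz function ψ ∈ 𝒮(ℝⁿ, ℂ) the following three conditions are equivalent: (a) every partial derivative of ψ of every order (including ψ itself) vanishes at the origin; (b) for every multi-index μ and every t > 0, ∂^μψ(ξ) = o(|ξ|^t) as ξ → 0; (c) for every m ∈ ℕ, the function ξ ↦ |ξ|^{−2m} ψ(ξ) on ℝⁿ ∖ {0}, extended by the value 0 at the origin, is a Schwartz function. -/
/-!
If `ψ` is flat at the origin, the mean value inequality applied inductively bounds every derivative
of `ψ` by `C ‖ξ‖ ^ N` for every `N` (`SchwartzMap.norm_iteratedFDeriv_le_of_flat`), which gives (b).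
The little-o condition evaluated at `ξ = 0` itself returns (a), because `0 ^ t = 0` for `t > 0`.

For (a) ⇒ (c), the `i`-th derivative of `‖ξ‖ ^ (-2m)` is homogeneous of degree `-2m - i` and bounded
on the unit sphere, hence is at most `C ‖ξ‖ ^ (-2m - i)`. By the Leibniz rule every derivative of
`‖ξ‖ ^ (-2m) ψ(ξ)` away from the origin decays rapidly at infinity and is `O(‖ξ‖ ^ 2)` at the origin,
so the extension by zero is smooth (`contDiff_of_norm_iteratedFDeriv_le`) and Schwartz.

For (c) ⇒ (a), `m = 0` and continuity give `ψ 0 = 0` (the origin is not isolated as `n ≥ 1`), so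
`ψ = (‖ξ‖ ^ 2) ^ m χ` everywhere with `χ` smooth, and all derivatives of order less than `m` vanish
at the origin (`iteratedFDeriv_pow_smul_eq_zero`).
-/

open MeasureTheory SchwartzMap Asymptotics Filter Topology Classical

section Helpers

variable {E F : Type*} [NormedAddCommGroup E] [NormedSpace ℝ E]
  [NormedAddCommGroup F] [NormedSpace ℝ F]

/-- Flatness propagates to bounds of every polynomial order: the mean value inequality on the ball
of radius `‖ξ‖` gains one power of `‖ξ‖` from the bound on the next derivative. -/
lemma SchwartzMap.norm_iteratedFDeriv_le_of_flat (ψ : SchwartzMap E F)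
    (h : ∀ k : ℕ, iteratedFDeriv ℝ k ψ 0 = 0) (N : ℕ) :
    ∀ k : ℕ, ∃ C, 0 < C ∧ ∀ ξ, ‖iteratedFDeriv ℝ k ψ ξ‖ ≤ C * ‖ξ‖ ^ N := by
  induction N with
  | zero =>
    intro k
    obtain ⟨C, hC, hb⟩ := ψ.decay 0 k
    exact ⟨C, hC, fun ξ => by simpa using hb ξ⟩
  | succ N ih =>
    intro k
    obtain ⟨C, hC, hb⟩ := ih (k + 1)
    refine ⟨C, hC, fun ξ => ?_⟩
    have key := (convex_closedBall (0 : E) ‖ξ‖).norm_image_sub_le_of_norm_fderiv_le (𝕜 := ℝ)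
      (f := iteratedFDeriv ℝ k ψ) (C := C * ‖ξ‖ ^ N) (x := 0) (y := ξ)
      (fun x _ => (ψ.smooth ⊤).contDiffAt.differentiableAt_iteratedFDeriv
        (by exact_mod_cast WithTop.coe_lt_top k))
      (fun x hx => by
        rw [norm_fderiv_iteratedFDeriv]
        refine (hb x).trans ?_
        have : ‖x‖ ≤ ‖ξ‖ := by simpa using hx
        gcongr)
      (by simp) (by simp)
    rw [h k, sub_zero, sub_zero] at key
    rw [pow_succ, ← mul_assoc]
    exact key

/-- Bounds near the origin come from flatness, bounds at infinity from Schwartz decay. -/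
lemma SchwartzMap.pow_mul_norm_iteratedFDeriv_le_of_flat (ψ : SchwartzMap E F)
    (h : ∀ k : ℕ, iteratedFDeriv ℝ k ψ 0 = 0) (j N k : ℕ) :
    ∃ C, 0 < C ∧ ∀ ξ, ‖ξ‖ ^ j * ‖iteratedFDeriv ℝ k ψ ξ‖ ≤ C * ‖ξ‖ ^ N := by
  obtain ⟨C₁, hC₁, h₁⟩ := ψ.norm_iteratedFDeriv_le_of_flat h N k
  obtain ⟨C₂, hC₂, h₂⟩ := ψ.decay j k
  refine ⟨C₁ + C₂, by positivity, fun ξ => ?_⟩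
  rcases le_total ‖ξ‖ 1 with hξ | hξ
  · calc ‖ξ‖ ^ j * ‖iteratedFDeriv ℝ k ψ ξ‖ ≤ 1 * (C₁ * ‖ξ‖ ^ N) := by
          gcongr
          · exact pow_le_one₀ (norm_nonneg _) hξ
          · exact h₁ ξ
      _ ≤ (C₁ + C₂) * ‖ξ‖ ^ N := by
          rw [one_mul]; gcongr; linarith
  · calc ‖ξ‖ ^ j * ‖iteratedFDeriv ℝ k ψ ξ‖ ≤ C₂ * 1 := by simpa using h₂ ξ
      _ ≤ (C₁ + C₂) * ‖ξ‖ ^ N := by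
          gcongr
          · linarith
          · exact one_le_pow₀ hξ

/-- A removable singularity criterion: the Taylor series extended by `0` at the origin is a Taylor
series on the whole space, since each derivative is `O(‖ξ‖²)`. -/
lemma contDiff_of_norm_iteratedFDeriv_le {f : E → F} (h0 : f 0 = 0)
    (hf : ∀ ξ, ξ ≠ 0 → ContDiffAt ℝ (⊤ : ℕ∞) f ξ)
    (hb : ∀ k : ℕ, ∃ C, ∀ ξ, ξ ≠ 0 → ‖iteratedFDeriv ℝ k f ξ‖ ≤ C * ‖ξ‖ ^ 2) :
    ContDiff ℝ (⊤ : ℕ∞) f ∧ ∀ k : ℕ, iteratedFDeriv ℝ k f 0 = 0 := by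
  classical
  let p : E → FormalMultilinearSeries ℝ E F :=
    fun ξ k => if ξ = 0 then 0 else iteratedFDeriv ℝ k f ξ
  have hp0 : ∀ k, p 0 k = 0 := fun k => if_pos rfl
  have hp : ∀ ξ, ξ ≠ 0 → ∀ k, p ξ k = iteratedFDeriv ℝ k f ξ := fun ξ hξ k => if_neg hξ
  have hder : ∀ (k : ℕ) (ξ : E), HasFDerivAt (fun y => p y k) (p ξ k.succ).curryLeft ξ := by
    intro k ξ
    rcases eq_or_ne ξ 0 with rfl | hξ
    · obtain ⟨C, hC⟩ := hb k
      have hz : (p 0 k.succ).curryLeft = 0 := by rw [hp0]; ext; simp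
      rw [hz, hasFDerivAt_iff_isLittleO_nhds_zero]
      have hO : (fun y : E => p y k) =O[𝓝 0] fun y => ‖y‖ ^ 2 := by
        refine IsBigO.of_bound C (Eventually.of_forall fun y => ?_)
        rcases eq_or_ne y 0 with rfl | hy
        · simp [hp0]
        · simpa [hp y hy] using hC y hy
      simpa [hp0] using hO.trans_isLittleO (isLittleO_norm_pow_id one_lt_two)
    · have hd : DifferentiableAt ℝ (iteratedFDeriv ℝ k f) ξ :=
        (hf ξ hξ).differentiableAt_iteratedFDeriv (by exact_mod_cast WithTop.coe_lt_top k)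
      have he : (fun y => p y k) =ᶠ[𝓝 ξ] iteratedFDeriv ℝ k f := by
        filter_upwards [isOpen_ne.mem_nhds hξ] with y hy using hp y hy k
      have hc : (p ξ k.succ).curryLeft = fderiv ℝ (iteratedFDeriv ℝ k f) ξ := by
        rw [hp ξ hξ]; ext; rfl
      rw [hc]
      exact hd.hasFDerivAt.congr_of_eventuallyEq he
  have hT : HasFTaylorSeriesUpTo (⊤ : ℕ∞) f p := by
    refine ⟨fun ξ => ?_, fun k _ ξ => hder k ξ,
      fun k _ => continuous_iff_continuousAt.2 fun ξ => (hder k ξ).continuousAt⟩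
    rcases eq_or_ne ξ 0 with rfl | hξ
    · simp [hp0, h0]
    · rw [hp ξ hξ]; rfl
  exact ⟨hT.contDiff, fun k => by
    rw [← hT.eq_iteratedFDeriv (by exact_mod_cast le_top) 0, hp0]⟩

/-- A factor vanishing at the origin raises the order of vanishing by at least one, by the Leibniz
rule. -/
lemma iteratedFDeriv_pow_smul_eq_zero {q : E → ℝ} (hq : ContDiff ℝ (⊤ : ℕ∞) q) (hq0 : q 0 = 0)
    (m : ℕ) : ∀ {f : E → F}, ContDiff ℝ (⊤ : ℕ∞) f → ∀ k < m,
      iteratedFDeriv ℝ k (fun ξ => q ξ ^ m • f ξ) 0 = 0 := by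
  induction m with
  | zero => intro f _ k hk; omega
  | succ m ih =>
    intro f hf k hk
    have hg : ContDiff ℝ (⊤ : ℕ∞) fun ξ => q ξ ^ m • f ξ := (hq.pow m).smul hf
    have heq : (fun ξ => q ξ ^ (m + 1) • f ξ) = fun ξ => q ξ • (q ξ ^ m • f ξ) := by
      ext ξ; rw [smul_smul, pow_succ']
    rw [heq, ← norm_le_zero_iff]
    refine (norm_iteratedFDeriv_smul_le hq hg 0 (n := k) (by exact_mod_cast le_top)).trans ?_
    refine (Finset.sum_eq_zero fun i hi => ?_).le
    rcases Nat.eq_zero_or_pos i with rfl | hi0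
    · simp [hq0]
    · have : k - i < m := by
        have := Finset.mem_range.1 hi
        omega
      rw [ih hf _ this]; simp

end Helpers

section InnerHelpers

variable {E : Type*} [NormedAddCommGroup E] [InnerProductSpace ℝ E]

lemma contDiffAt_norm_rpow (s : ℝ) {ξ : E} (hξ : ξ ≠ 0) :
    ContDiffAt ℝ (⊤ : ℕ∞) (fun x : E => ‖x‖ ^ s) ξ :=
  (contDiffAt_id.norm ℝ hξ).rpow_const_of_ne (norm_ne_zero_iff.2 hξ)

/-- The derivative of order `i` of the homogeneous function `‖ξ‖ ^ s` is homogeneous of degree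
`s - i`; only the resulting identity of norms is recorded. -/
lemma iteratedFDeriv_norm_rpow_smul (s : ℝ) (i : ℕ) {r : ℝ} (hr : 0 < r) {x : E} (hx : x ≠ 0) :
    r ^ i * ‖iteratedFDeriv ℝ i (fun x : E => ‖x‖ ^ s) (r • x)‖ =
      r ^ s * ‖iteratedFDeriv ℝ i (fun x : E => ‖x‖ ^ s) x‖ := by
  let L : E ≃L[ℝ] E := ContinuousLinearEquiv.smulLeft (Units.mk0 r hr.ne')
  have hL : ∀ y, L y = r • y := fun y => rfl
  have h1 := L.iteratedFDerivWithin_comp_right (fun x : E => ‖x‖ ^ s) uniqueDiffOn_univ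
    (x := x) (Set.mem_univ _) i
  simp only [Set.preimage_univ, iteratedFDerivWithin_univ] at h1
  have h2 : (fun x : E => ‖x‖ ^ s) ∘ L = r ^ s • fun x : E => ‖x‖ ^ s := by
    ext y
    simp [hL, norm_smul, abs_of_pos hr, Real.mul_rpow hr.le (norm_nonneg y)]
  rw [h2, iteratedFDeriv_const_smul_apply
    ((contDiffAt_norm_rpow s hx).of_le (by exact_mod_cast le_top))] at h1
  have h3 : (iteratedFDeriv ℝ i (fun x : E => ‖x‖ ^ s) (L x)).compContinuousLinearMap
      (fun _ => (L : E →L[ℝ] E)) = r ^ i • iteratedFDeriv ℝ i (fun x : E => ‖x‖ ^ s) (r • x) := by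
    ext v
    simp [hL, ContinuousMultilinearMap.map_smul_univ]
  rw [h3] at h1
  have h4 := congrArg norm h1
  rw [norm_smul, norm_smul, Real.norm_of_nonneg (by positivity),
    Real.norm_of_nonneg (by positivity)] at h4
  exact h4.symm

/-- By homogeneity it suffices to bound the derivatives on the compact unit sphere. -/
lemma exists_pow_mul_norm_iteratedFDeriv_norm_rpow_le [ProperSpace E] (m i : ℕ) :
    ∃ C, 0 < C ∧ ∀ ξ : E, ξ ≠ 0 →
      ‖ξ‖ ^ (2 * m + i) * ‖iteratedFDeriv ℝ i (fun x : E => ‖x‖ ^ (-(2 * (m : ℝ)))) ξ‖ ≤ C := by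
  have hcont : ContinuousOn (iteratedFDeriv ℝ i (fun x : E => ‖x‖ ^ (-(2 * (m : ℝ)))))
      (Metric.sphere 0 1) := fun x hx =>
    ((contDiffAt_norm_rpow _ (ne_zero_of_mem_unit_sphere ⟨x, hx⟩)).continuousAt_iteratedFDeriv
      (by exact_mod_cast le_top)).continuousWithinAt
  obtain ⟨C, hC⟩ := (isCompact_sphere (0 : E) 1).exists_bound_of_continuousOn hcont
  refine ⟨max C 1, by positivity, fun ξ hξ => ?_⟩
  have hr : 0 < ‖ξ‖ := norm_pos_iff.2 hξ
  have hx : ‖‖ξ‖⁻¹ • ξ‖ = 1 := by rw [norm_smul, norm_inv, norm_norm, inv_mul_cancel₀ hr.ne']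
  have hx0 : ‖ξ‖⁻¹ • ξ ≠ 0 := by rw [← norm_ne_zero_iff, hx]; exact one_ne_zero
  have h := iteratedFDeriv_norm_rpow_smul (-(2 * (m : ℝ))) i hr hx0
  rw [smul_inv_smul₀ hr.ne'] at h
  have hpow : ‖ξ‖ ^ (2 * m) * ‖ξ‖ ^ (-(2 * (m : ℝ))) = 1 := by
    rw [← Real.rpow_natCast, ← Real.rpow_add hr]; simp
  rw [pow_add, mul_assoc, h, ← mul_assoc, hpow, one_mul]
  exact (hC _ (by simpa using hx)).trans (le_max_left _ _)

/-- The Leibniz rule: the singularity of the derivatives of `‖ξ‖ ^ (-2m)` is absorbed by the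
flatness of `ψ`. -/
lemma SchwartzMap.pow_mul_norm_iteratedFDeriv_norm_rpow_smul_le [ProperSpace E] (ψ : SchwartzMap E ℂ)
    (h : ∀ k : ℕ, iteratedFDeriv ℝ k ψ 0 = 0) (m j N k : ℕ) :
    ∃ C, 0 < C ∧ ∀ ξ : E, ξ ≠ 0 →
      ‖ξ‖ ^ j * ‖iteratedFDeriv ℝ k (fun x => (‖x‖ ^ (-(2 * (m : ℝ)))) • ψ x) ξ‖
        ≤ C * ‖ξ‖ ^ N := by
  choose A hA hAb using fun i => exists_pow_mul_norm_iteratedFDeriv_norm_rpow_le (E := E) m i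
  choose B hB hBb using fun i =>
    ψ.pow_mul_norm_iteratedFDeriv_le_of_flat h j (N + (2 * m + i)) (k - i)
  refine ⟨∑ i ∈ Finset.range (k + 1), (k.choose i : ℝ) * A i * B i + 1,
    add_pos_of_nonneg_of_pos (Finset.sum_nonneg fun i _ => by
      have := hA i; have := hB i; positivity) one_pos, fun ξ hξ => ?_⟩
  have hr : 0 < ‖ξ‖ := norm_pos_iff.2 hξ
  have hopen : IsOpen ({0}ᶜ : Set E) := isOpen_compl_singleton
  have hmem : ξ ∈ ({0}ᶜ : Set E) := hξ
  have hL := norm_iteratedFDerivWithin_smul_le (𝕜 := ℝ) (s := ({0}ᶜ : Set E)) (N := (⊤ : ℕ∞))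
    (f := fun x : E => ‖x‖ ^ (-(2 * (m : ℝ)))) (g := ψ)
    (fun x hx => (contDiffAt_norm_rpow _ hx).contDiffWithinAt) (ψ.smooth ⊤).contDiffOn
    hopen.uniqueDiffOn hmem (n := k) (by exact_mod_cast le_top)
  simp only [iteratedFDerivWithin_of_isOpen _ hopen hmem] at hL
  have hterm : ∀ i, ‖ξ‖ ^ j * ((k.choose i : ℝ)
      * ‖iteratedFDeriv ℝ i (fun x : E => ‖x‖ ^ (-(2 * (m : ℝ)))) ξ‖
      * ‖iteratedFDeriv ℝ (k - i) ψ ξ‖) ≤ (k.choose i : ℝ) * A i * B i * ‖ξ‖ ^ N := by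
    intro i
    have h1 := hAb i ξ hξ
    have h2 := hBb i ξ
    set a := ‖iteratedFDeriv ℝ i (fun x : E => ‖x‖ ^ (-(2 * (m : ℝ)))) ξ‖
    set b := ‖iteratedFDeriv ℝ (k - i) ψ ξ‖
    have ha : 0 ≤ a := norm_nonneg _
    have hBi := hB i
    calc ‖ξ‖ ^ j * ((k.choose i : ℝ) * a * b) = (k.choose i : ℝ) * a * (‖ξ‖ ^ j * b) := by ring
      _ ≤ (k.choose i : ℝ) * a * (B i * ‖ξ‖ ^ (N + (2 * m + i))) := by gcongr
      _ = (k.choose i : ℝ) * (‖ξ‖ ^ (2 * m + i) * a) * B i * ‖ξ‖ ^ N := by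
          rw [pow_add ‖ξ‖ N]; ring
      _ ≤ (k.choose i : ℝ) * A i * B i * ‖ξ‖ ^ N := by gcongr
  calc _ ≤ ‖ξ‖ ^ j * _ := mul_le_mul_of_nonneg_left hL (by positivity)
    _ ≤ ∑ i ∈ Finset.range (k + 1), (k.choose i : ℝ) * A i * B i * ‖ξ‖ ^ N := by
        rw [Finset.mul_sum]
        exact Finset.sum_le_sum fun i _ => hterm i
    _ ≤ _ := by
        rw [← Finset.sum_mul]
        gcongr
        linarith

lemma SchwartzMap.exists_norm_rpow_smul_of_flat [ProperSpace E] (ψ : SchwartzMap E ℂ)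
    (h : ∀ k : ℕ, iteratedFDeriv ℝ k ψ 0 = 0) (m : ℕ) :
    ∃ χ : SchwartzMap E ℂ, ∀ ξ : E,
      χ ξ = if ξ = 0 then 0 else (‖ξ‖ ^ (-(2 * (m : ℝ)))) • ψ ξ := by
  let f : E → ℂ := fun ξ => if ξ = 0 then 0 else (‖ξ‖ ^ (-(2 * (m : ℝ)))) • ψ ξ
  have he : ∀ ξ : E, ξ ≠ 0 → f =ᶠ[𝓝 ξ] fun x => (‖x‖ ^ (-(2 * (m : ℝ)))) • ψ x := by
    intro ξ hξ
    filter_upwards [isOpen_ne.mem_nhds hξ] with y hy using if_neg hy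
  have hder : ∀ (k : ℕ) (ξ : E), ξ ≠ 0 → iteratedFDeriv ℝ k f ξ =
      iteratedFDeriv ℝ k (fun x => (‖x‖ ^ (-(2 * (m : ℝ)))) • ψ x) ξ :=
    fun k ξ hξ => ((he ξ hξ).iteratedFDeriv ℝ k).eq_of_nhds
  obtain ⟨hs, hz⟩ := contDiff_of_norm_iteratedFDeriv_le (f := f) (if_pos rfl)
    (fun ξ hξ => ((contDiffAt_norm_rpow _ hξ).smul
      (ψ.smooth ⊤).contDiffAt).congr_of_eventuallyEq (he ξ hξ))
    (fun k => by
      obtain ⟨C, -, hC⟩ := ψ.pow_mul_norm_iteratedFDeriv_norm_rpow_smul_le h m 0 2 k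
      exact ⟨C, fun ξ hξ => by simpa [hder k ξ hξ] using hC ξ hξ⟩)
  refine ⟨⟨f, hs, fun j k => ?_⟩, fun ξ => rfl⟩
  obtain ⟨C, hC0, hC⟩ := ψ.pow_mul_norm_iteratedFDeriv_norm_rpow_smul_le h m j 0 k
  refine ⟨C, fun ξ => ?_⟩
  rcases eq_or_ne ξ 0 with rfl | hξ
  · simpa [hz k] using hC0.le
  · simpa [hder k ξ hξ] using hC ξ hξ

end InnerHelpers

/-- For a Schwartz function `ψ` the following are equivalent:
(a) all iterated derivatives of `ψ` vanish at the origin;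
(b) every iterated derivative of `ψ` is `o(|ξ|^t)` at the origin for every `t > 0`;
(c) for every `m`, the function `|ξ|^{-2m} ψ(ξ)` (extended by `0` at the origin) is a
Schwartz function. -/
theorem stmt_5 {n : ℕ} (hn : 1 ≤ n) (ψ : SchwartzMap (EuclideanSpace ℝ (Fin n)) ℂ) :
    ((∀ k : ℕ, iteratedFDeriv ℝ k (⇑ψ) 0 = 0) ↔
      (∀ (k : ℕ) (t : ℝ), 0 < t →
        (fun ξ : EuclideanSpace ℝ (Fin n) => ‖iteratedFDeriv ℝ k (⇑ψ) ξ‖)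
          =o[𝓝 (0 : EuclideanSpace ℝ (Fin n))] fun ξ => ‖ξ‖ ^ t)) ∧
    ((∀ k : ℕ, iteratedFDeriv ℝ k (⇑ψ) 0 = 0) ↔
      (∀ m : ℕ, ∃ χ : SchwartzMap (EuclideanSpace ℝ (Fin n)) ℂ,
        ∀ ξ : EuclideanSpace ℝ (Fin n),
          χ ξ = if ξ = 0 then 0 else (‖ξ‖ ^ (-(2 * (m : ℝ)))) • ψ ξ)) := by
  refine ⟨⟨fun h k t ht => ?_, fun h k => ?_⟩, ⟨fun h m => ?_, fun h k => ?_⟩⟩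
    -- An integer exponent above `t` leaves a positive power of `‖ξ‖` to spare.
  · obtain ⟨N, hN⟩ := exists_nat_gt t
    obtain ⟨C, hC, hb⟩ := ψ.norm_iteratedFDeriv_le_of_flat h N k
    have hO : (fun ξ : EuclideanSpace ℝ (Fin n) => ‖iteratedFDeriv ℝ k (⇑ψ) ξ‖)
        =O[𝓝 0] fun ξ => ‖ξ‖ ^ N :=
      IsBigO.of_bound C (Eventually.of_forall fun ξ => by simpa using hb ξ)
    refine hO.trans_isLittleO ?_
    have hlim : Tendsto (fun ξ : EuclideanSpace ℝ (Fin n) => ‖ξ‖ ^ ((N : ℝ) - t)) (𝓝 0) (𝓝 0) := by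
      have hc : Continuous fun ξ : EuclideanSpace ℝ (Fin n) => ‖ξ‖ ^ ((N : ℝ) - t) :=
        continuous_norm.rpow_const fun _ => Or.inr (by linarith)
      simpa [Real.zero_rpow (sub_pos.2 hN).ne'] using hc.tendsto 0
    refine (((isLittleO_one_iff ℝ).2 hlim).mul_isBigO
      (isBigO_refl (fun ξ : EuclideanSpace ℝ (Fin n) => ‖ξ‖ ^ t) (𝓝 0))).congr (fun ξ => ?_)
      (fun ξ => one_mul _)
    rw [← Real.rpow_add_of_nonneg (norm_nonneg _) (by linarith) ht.le, sub_add_cancel,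
      Real.rpow_natCast]
  · have := ((h k 1 one_pos).bound one_pos).self_of_nhds
    simpa using this
  · obtain ⟨χ, hχ⟩ := ψ.exists_norm_rpow_smul_of_flat h m
    -- The two `if`s carry different decidability instances.
    exact ⟨χ, fun ξ => (hχ ξ).trans (by congr)⟩
  · have : Nonempty (Fin n) := ⟨⟨0, hn⟩⟩
    have hψ0 : ψ 0 = 0 := by
      obtain ⟨χ, hχ⟩ := h 0
      have h1 : Tendsto ψ (𝓝[≠] 0) (𝓝 (ψ 0)) := ψ.continuous.continuousAt.continuousWithinAt
      have h2 : Tendsto χ (𝓝[≠] 0) (𝓝 (χ 0)) := χ.continuous.continuousAt.continuousWithinAt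
      have h3 : χ =ᶠ[𝓝[≠] 0] ψ := by
        filter_upwards [self_mem_nhdsWithin] with ξ hξ
        rw [hχ, if_neg (by simpa using hξ)]; simp
      rw [tendsto_nhds_unique h1 (h2.congr' h3), hχ, if_pos rfl]
    obtain ⟨χ, hχ⟩ := h (k + 1)
    have heq : (ψ : EuclideanSpace ℝ (Fin n) → ℂ) = fun ξ => (‖ξ‖ ^ 2) ^ (k + 1) • χ ξ := by
      ext ξ
      rcases eq_or_ne ξ 0 with rfl | hξ
      · simp [hψ0]
      · have hr : 0 < ‖ξ‖ := norm_pos_iff.2 hξ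
        have hp : (‖ξ‖ ^ 2) ^ (k + 1) * ‖ξ‖ ^ (-(2 * ((k + 1 : ℕ) : ℝ))) = 1 := by
          rw [← pow_mul, ← Real.rpow_natCast, ← Real.rpow_add hr]; simp
        rw [hχ, if_neg hξ, smul_smul, hp, one_smul]
    rw [heq]
    exact iteratedFDeriv_pow_smul_eq_zero (contDiff_norm_sq ℝ) (by simp) (k + 1) (χ.smooth ⊤) k
      (Nat.lt_succ_self k)
end

section
/- Ψ is a module over the multiplier algebra: let σ : ℝⁿ ∖ {0} → ℂ be smooth and suppose that for every multi-index μ there exist m ∈ ℕ and C > 0 with |∂^μσ(ξ)| ≤ C(|ξ|^m + |ξ|^{−m}) for all ξ ≠ 0. Then for every ψ ∈ Ψ, the function equal to σ(ξ)·ψ(ξ) for ξ ≠ 0 and to 0 at the origin is a Schwartz function and belongs to Ψ. -/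
/-!
Flatness at the origin beats every negative power. Since all derivatives of `ψ ∈ Ψ` vanish at `0`,
repeated use of the mean value inequality bounds each derivative of `ψ` by a constant times
`‖ξ‖ ^ N` for every `N : ℕ`; together with Schwartz decay this gives a bound by a constant times
`‖ξ‖ ^ p` for every integer `p` (`exists_norm_iteratedFDeriv_le_zpow`). By the Leibniz rule, the
derivatives of the product `σ ψ` away from the origin obey bounds of the same kind, because the
growth `‖ξ‖ ^ m + ‖ξ‖ ^ (-m)` of the derivatives of `σ` only shifts the exponent `p`
(`exists_norm_iteratedFDeriv_mul_le_zpow`).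

The exponent `p = 2` yields smoothness at the origin: a function that is smooth off `0`, vanishes
at `0` and has all derivatives of size `O(‖ξ‖ ^ 2)` is smooth with all derivatives zero at `0`
(`contDiff_of_iteratedFDeriv_le_sq`). Negative exponents yield the Schwartz decay.
-/

section Flatness

variable {E F : Type*} [NormedAddCommGroup E] [NormedSpace ℝ E]
  [NormedAddCommGroup F] [NormedSpace ℝ F]

/-- A Schwartz function vanishing to infinite order at `0` is, with all its derivatives,
`O(‖ξ‖ ^ N)` for every `N`, uniformly on the whole space. -/
lemma exists_norm_iteratedFDeriv_le_pow_s11 (ψ : SchwartzMap E F)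
    (hψ : ∀ k : ℕ, iteratedFDeriv ℝ k (⇑ψ) 0 = 0) (N : ℕ) :
    ∀ k : ℕ, ∃ C : ℝ, ∀ ξ : E, ‖iteratedFDeriv ℝ k (⇑ψ) ξ‖ ≤ C * ‖ξ‖ ^ N := by
  induction N with
  | zero =>
    intro k
    obtain ⟨C, hC⟩ := ψ.decay' 0 k
    refine ⟨C, fun ξ => ?_⟩
    have h : ‖ξ‖ ^ 0 * ‖iteratedFDeriv ℝ k (⇑ψ) ξ‖ ≤ C := hC ξ
    simpa using h
  | succ N ih =>
    intro k
    obtain ⟨C, hC⟩ := ih (k + 1)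
    refine ⟨|C|, fun ξ => ?_⟩
    have hd : Differentiable ℝ (iteratedFDeriv ℝ k (⇑ψ)) :=
      (ψ.smooth ⊤).differentiable_iteratedFDeriv (by exact_mod_cast WithTop.coe_lt_top k)
    -- mean value inequality on the closed ball of radius `‖ξ‖`, which contains both `0` and `ξ`
    have h := (convex_closedBall (0 : E) ‖ξ‖).norm_image_sub_le_of_norm_fderiv_le (𝕜 := ℝ)
      (f := iteratedFDeriv ℝ k (⇑ψ)) (C := |C| * ‖ξ‖ ^ N) (x := 0) (y := ξ)
      (fun x _ => hd x) (fun x hx => ?_) (by simp) (by simp)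
    · rw [hψ k, sub_zero, sub_zero] at h
      rwa [pow_succ, ← mul_assoc]
    · rw [norm_fderiv_iteratedFDeriv]
      have hx' : ‖x‖ ≤ ‖ξ‖ := by simpa using hx
      refine (hC x).trans ?_
      gcongr
      exact le_abs_self C

lemma exists_norm_iteratedFDeriv_le_zpow (ψ : SchwartzMap E F)
    (hψ : ∀ k : ℕ, iteratedFDeriv ℝ k (⇑ψ) 0 = 0) (k : ℕ) (p : ℤ) :
    ∃ C : ℝ, ∀ ξ : E, ξ ≠ 0 → ‖iteratedFDeriv ℝ k (⇑ψ) ξ‖ ≤ C * ‖ξ‖ ^ p := by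
  obtain ⟨N, rfl | rfl⟩ := p.eq_nat_or_neg
  · obtain ⟨C, hC⟩ := exists_norm_iteratedFDeriv_le_pow_s11 ψ hψ N k
    exact ⟨C, fun ξ _ => by simpa using hC ξ⟩
  · obtain ⟨C, hC⟩ := ψ.decay' N k
    refine ⟨C, fun ξ hξ => ?_⟩
    have hpos : 0 < ‖ξ‖ ^ N := pow_pos (norm_pos_iff.mpr hξ) N
    rw [zpow_neg, zpow_natCast, ← div_eq_mul_inv, le_div_iff₀ hpos, mul_comm]
    exact hC ξ

/-- Leibniz rule off the origin: the growth of `σ` only shifts the exponent `p`, which is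
arbitrary. -/
lemma exists_norm_iteratedFDeriv_mul_le_zpow {σ : E → ℂ}
    (hσ : ContDiffOn ℝ (⊤ : ℕ∞) σ {(0 : E)}ᶜ)
    (hbound : ∀ k : ℕ, ∃ m : ℕ, ∃ C : ℝ, 0 < C ∧ ∀ ξ : E, ξ ≠ 0 →
        ‖iteratedFDeriv ℝ k σ ξ‖ ≤ C * (‖ξ‖ ^ (m : ℝ) + ‖ξ‖ ^ (-(m : ℝ))))
    (ψ : SchwartzMap E ℂ) (hψ : ∀ k : ℕ, iteratedFDeriv ℝ k (⇑ψ) 0 = 0) (k : ℕ) (p : ℤ) :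
    ∃ C : ℝ, ∀ ξ : E, ξ ≠ 0 →
      ‖iteratedFDeriv ℝ k (fun x => σ x * ψ x) ξ‖ ≤ C * ‖ξ‖ ^ p := by
  have hterm : ∀ i : ℕ, ∃ C : ℝ, ∀ ξ : E, ξ ≠ 0 →
      ‖iteratedFDeriv ℝ i σ ξ‖ * ‖iteratedFDeriv ℝ (k - i) (⇑ψ) ξ‖ ≤ C * ‖ξ‖ ^ p := by
    intro i
    obtain ⟨m, A, hA, hm⟩ := hbound i
    obtain ⟨C₁, h₁⟩ := exists_norm_iteratedFDeriv_le_zpow ψ hψ (k - i) (p - m)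
    obtain ⟨C₂, h₂⟩ := exists_norm_iteratedFDeriv_le_zpow ψ hψ (k - i) (p + m)
    refine ⟨A * (C₁ + C₂), fun ξ hξ => ?_⟩
    have hpos : 0 < ‖ξ‖ := norm_pos_iff.mpr hξ
    have hm' := hm ξ hξ
    rw [Real.rpow_neg hpos.le, Real.rpow_natCast] at hm'
    have e₁ := h₁ ξ hξ
    have e₂ := h₂ ξ hξ
    rw [zpow_sub₀ hpos.ne', zpow_natCast] at e₁
    rw [zpow_add₀ hpos.ne', zpow_natCast] at e₂
    set d := ‖iteratedFDeriv ℝ (k - i) (⇑ψ) ξ‖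
    have hd : 0 ≤ d := norm_nonneg _
    have hq : 0 < ‖ξ‖ ^ m := pow_pos hpos m
    calc _ ≤ A * (‖ξ‖ ^ m + (‖ξ‖ ^ m)⁻¹) * d := by gcongr
      _ = A * (‖ξ‖ ^ m * d + (‖ξ‖ ^ m)⁻¹ * d) := by ring
      _ ≤ A * (‖ξ‖ ^ m * (C₁ * (‖ξ‖ ^ p / ‖ξ‖ ^ m))
            + (‖ξ‖ ^ m)⁻¹ * (C₂ * (‖ξ‖ ^ p * ‖ξ‖ ^ m))) := by gcongr
      _ = A * (C₁ + C₂) * ‖ξ‖ ^ p := by field_simp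
  choose C hC using hterm
  refine ⟨∑ i ∈ Finset.range (k + 1), (k.choose i : ℝ) * C i, fun ξ hξ => ?_⟩
  have ho : IsOpen ({(0 : E)}ᶜ : Set E) := isOpen_compl_singleton
  have hξ' : ξ ∈ ({(0 : E)}ᶜ : Set E) := hξ
  have hL := norm_iteratedFDerivWithin_mul_le (𝕜 := ℝ) hσ (ψ.smooth ⊤).contDiffOn
    ho.uniqueDiffOn hξ' (n := k) (by exact_mod_cast le_top)
  simp only [iteratedFDerivWithin_of_isOpen _ ho hξ'] at hL
  refine hL.trans ?_
  rw [Finset.sum_mul]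
  refine Finset.sum_le_sum fun i _ => ?_
  rw [mul_assoc, mul_assoc]
  exact mul_le_mul_of_nonneg_left (hC i ξ hξ) (Nat.cast_nonneg _)

/-- Removable singularity: quadratic bounds on all derivatives make each of them differentiable
at `0` with zero derivative there. -/
lemma contDiff_of_iteratedFDeriv_le_sq {f : E → F} (hf : ContDiffOn ℝ (⊤ : ℕ∞) f {(0 : E)}ᶜ)
    (h0 : f 0 = 0)
    (hb : ∀ k : ℕ, ∃ C : ℝ, ∀ ξ : E, ξ ≠ 0 → ‖iteratedFDeriv ℝ k f ξ‖ ≤ C * ‖ξ‖ ^ 2) :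
    ContDiff ℝ (⊤ : ℕ∞) f ∧ ∀ k : ℕ, iteratedFDeriv ℝ k f 0 = 0 := by
  have hderiv : ∀ k : ℕ, iteratedFDeriv ℝ k f 0 = 0 →
      HasFDerivAt (𝕜 := ℝ) (iteratedFDeriv ℝ k f) 0 (0 : E) := by
    intro k hk
    obtain ⟨C, hC⟩ := hb k
    refine Asymptotics.IsBigO.hasFDerivAt (n := 2) (.of_bound C (.of_forall fun ξ => ?_))
      one_lt_two
    by_cases hξ : ξ = 0
    · simp [hξ, hk]
    · simpa using hC ξ hξ
  have hzero : ∀ k : ℕ, iteratedFDeriv ℝ k f 0 = 0 := by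
    intro k
    induction k with
    | zero => rw [← norm_eq_zero, norm_iteratedFDeriv_zero, h0, norm_zero]
    | succ k ih =>
      rw [← norm_eq_zero, ← norm_fderiv_iteratedFDeriv, (hderiv k ih).fderiv]
      exact norm_zero (E := E →L[ℝ] ContinuousMultilinearMap ℝ (fun _ : Fin k => E) F)
  refine ⟨contDiff_of_differentiable_iteratedFDeriv fun k _ ξ => ?_, hzero⟩
  by_cases hξ : ξ = 0
  · exact hξ ▸ (hderiv k (hzero k)).differentiableAt
  · exact (hf.contDiffAt (isOpen_compl_singleton.mem_nhds hξ)).differentiableAt_iteratedFDeriv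
      (by exact_mod_cast WithTop.coe_lt_top k)

end Flatness


open MeasureTheory SchwartzMap Classical

/-- The space `Ψ` of Schwartz functions all of whose derivatives vanish at the origin. -/
def PsiSet {n : ℕ} : Set (SchwartzMap (EuclideanSpace ℝ (Fin n)) ℂ) :=
  {ψ | ∀ k : ℕ, iteratedFDeriv ℝ k (⇑ψ) 0 = 0}

/-- `Ψ` is a module over the multiplier algebra `𝓜_{Ψ'}`: if `σ` is smooth away from the
origin with all derivatives bounded by `C(|ξ|^m + |ξ|^{-m})`, then for `ψ ∈ Ψ` the product
`σ·ψ` (extended by `0` at the origin) is a Schwartz function belonging to `Ψ`. -/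
theorem stmt_11 {n : ℕ} (hn : 1 ≤ n) (σ : EuclideanSpace ℝ (Fin n) → ℂ)
    (hσ : ContDiffOn ℝ (⊤ : ℕ∞) σ {(0 : EuclideanSpace ℝ (Fin n))}ᶜ)
    (hbound : ∀ k : ℕ, ∃ m : ℕ, ∃ C : ℝ, 0 < C ∧
      ∀ ξ : EuclideanSpace ℝ (Fin n), ξ ≠ 0 →
        ‖iteratedFDeriv ℝ k σ ξ‖ ≤ C * (‖ξ‖ ^ (m : ℝ) + ‖ξ‖ ^ (-(m : ℝ))))
    (ψ : SchwartzMap (EuclideanSpace ℝ (Fin n)) ℂ) (hψ : ψ ∈ PsiSet) :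
    ∃ χ : SchwartzMap (EuclideanSpace ℝ (Fin n)) ℂ, χ ∈ PsiSet ∧
      ∀ ξ : EuclideanSpace ℝ (Fin n), χ ξ = if ξ = 0 then 0 else σ ξ * ψ ξ := by
  set f : EuclideanSpace ℝ (Fin n) → ℂ := fun ξ => if ξ = 0 then 0 else σ ξ * ψ ξ with hf
  have heq : ∀ ξ : EuclideanSpace ℝ (Fin n), ξ ≠ 0 → f ξ = σ ξ * ψ ξ := fun ξ hξ => if_neg hξ
  have hfb : ∀ (k : ℕ) (p : ℤ), ∃ C : ℝ, ∀ ξ : EuclideanSpace ℝ (Fin n), ξ ≠ 0 →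
      ‖iteratedFDeriv ℝ k f ξ‖ ≤ C * ‖ξ‖ ^ p := by
    intro k p
    obtain ⟨C, hC⟩ := exists_norm_iteratedFDeriv_mul_le_zpow hσ hbound ψ hψ k p
    refine ⟨C, fun ξ hξ => ?_⟩
    have hnear : f =ᶠ[nhds ξ] fun x => σ x * ψ x := by
      filter_upwards [isOpen_compl_singleton.mem_nhds hξ] with x hx using heq x hx
    rw [(hnear.iteratedFDeriv ℝ k).eq_of_nhds]
    exact hC ξ hξ
  have hfs : ContDiffOn ℝ (⊤ : ℕ∞) f {(0 : EuclideanSpace ℝ (Fin n))}ᶜ :=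
    (hσ.mul (ψ.smooth ⊤).contDiffOn).congr heq
  obtain ⟨hsmooth, hzero⟩ := contDiff_of_iteratedFDeriv_le_sq hfs (if_pos rfl)
    (fun k => by exact_mod_cast hfb k 2)
  refine ⟨⟨f, hsmooth, fun p k => ?_⟩, hzero, fun ξ => rfl⟩
  obtain ⟨C, hC⟩ := hfb k (-p)
  refine ⟨|C|, fun ξ => ?_⟩
  by_cases hξ : ξ = 0
  · simp [hξ, hzero k]
  · have hpos : 0 < ‖ξ‖ ^ p := pow_pos (norm_pos_iff.mpr hξ) p
    have h := hC ξ hξ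
    rw [zpow_neg, zpow_natCast, ← div_eq_mul_inv, le_div_iff₀ hpos, mul_comm] at h
    exact h.trans (le_abs_self C)
end
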